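/- Let A: ℝ^M → U be a linear map with finite-dimensional range, let ℓ: U → ℝ^M be a bounded linear map, set A_ℓ = A ∘ ℓ, and define Λ₂(A) = sup over nonzero y of ‖A(y)‖/‖y‖₂, Λ_U(A) = sup over nonzero u of ‖u − A_ℓ(u)‖/‖u‖, Λ_U^bias(A) = sup over nonzero w in range(A) of ‖w − A_ℓ(w)‖/‖w‖. Let Z ⊆ range(A) be a closed subspace such that A_ℓ(z) = z for all z ∈ Z. Then for every u ∈ U and y ∈ ℝ^M: ‖A(y) − u‖ ≤ Λ₂(A)·‖y − ℓ(u)‖₂ + (Λ_U(A) + Λ_U^bias(A))·‖Π_{Z^⊥}(u)‖, where Π_{Z^⊥} is the orthogonal projection onto the orthogonal complement of Z. (Error bound for linear PBDW, displayed in Section 3.1.3.) -/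

import Mathlib

/-!
If `z` is any fixed point of `A ∘ l`, then `u - A (l u) = (1 - A ∘ l) (u - z)`, hence
`A y - u = A (y - l u) - (1 - A ∘ l) (u - z)`. Take norms, with `z` the orthogonal projection
of `u` onto `Z`; the constants `Λ₂` and `Λ_U` are the operator norms of `A` and `1 - A ∘ l`,
and `Λ_U^bias` is nonnegative.
-/

section NormedSpace

variable {𝕜 : Type*} [NontriviallyNormedField 𝕜]

theorem opNorm_eq_sSup_norm_div_norm {E F : Type*} [NormedAddCommGroup E] [NormedSpace 𝕜 E]
    [SeminormedAddCommGroup F] [NormedSpace 𝕜 F] (f : E →L[𝕜] F) :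
    ‖f‖ = sSup {r : ℝ | ∃ v : E, v ≠ 0 ∧ r = ‖f v‖ / ‖v‖} := by
  have opNorm_mem_upperBounds : ‖f‖ ∈ upperBounds {r : ℝ | ∃ v : E, v ≠ 0 ∧ r = ‖f v‖ / ‖v‖} := by
    rintro _ ⟨v, -, rfl⟩
    exact f.ratio_le_opNorm v
  have sSup_nonneg : 0 ≤ sSup {r : ℝ | ∃ v : E, v ≠ 0 ∧ r = ‖f v‖ / ‖v‖} := by
    refine Real.sSup_nonneg ?_
    rintro _ ⟨v, -, rfl⟩
    positivity
  refine le_antisymm (f.opNorm_le_bound' sSup_nonneg fun v hv ↦ ?_)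
    (Real.sSup_le opNorm_mem_upperBounds (norm_nonneg f))
  rw [← div_le_iff₀ (lt_of_le_of_ne (norm_nonneg v) hv.symm)]
  exact le_csSup ⟨‖f‖, opNorm_mem_upperBounds⟩ ⟨v, norm_ne_zero_iff.mp hv, rfl⟩

theorem linear_pbdw_error_bound_general {Y U : Type*}
    [SeminormedAddCommGroup Y] [NormedSpace 𝕜 Y] [SeminormedAddCommGroup U] [NormedSpace 𝕜 U]
    (A : Y →L[𝕜] U) (l : U →L[𝕜] Y) {z : U} (hz : A (l z) = z) (u : U) (y : Y) :
    ‖A y - u‖ ≤ ‖A‖ * ‖y - l u‖ + ‖ContinuousLinearMap.id 𝕜 U - A ∘L l‖ * ‖u - z‖ := by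
  have error_split :
      A y - u = A (y - l u) - (ContinuousLinearMap.id 𝕜 U - A ∘L l) (u - z) := by
    simp only [map_sub, sub_apply, ContinuousLinearMap.id_apply, ContinuousLinearMap.comp_apply, hz]
    abel
  calc ‖A y - u‖
      ≤ ‖A (y - l u)‖ + ‖(ContinuousLinearMap.id 𝕜 U - A ∘L l) (u - z)‖ :=
        error_split ▸ norm_sub_le _ _
    _ ≤ ‖A‖ * ‖y - l u‖ + ‖ContinuousLinearMap.id 𝕜 U - A ∘L l‖ * ‖u - z‖ :=
        add_le_add (A.le_opNorm _) (ContinuousLinearMap.le_opNorm _ _)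

end NormedSpace

/-- **Error bound for linear PBDW (Section 3.1.3).**
Let Z ⊆ range(A) be a closed subspace with A_ℓ(z) = z for all z ∈ Z.  Then
for every u ∈ U and y ∈ ℝ^M,
‖A(y) − u‖ ≤ Λ₂(A)‖y − ℓ(u)‖₂ + (Λ_U(A) + Λ_U^bias(A))‖Π_{Z^⊥}u‖. -/
theorem linear_pbdw_error_bound
    {U : Type*} [NormedAddCommGroup U] [InnerProductSpace ℝ U] [CompleteSpace U]
    {M : ℕ}
    (A : EuclideanSpace ℝ (Fin M) →ₗ[ℝ] U)
    (l : U →L[ℝ] EuclideanSpace ℝ (Fin M))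
    (Z : Submodule ℝ U) (hZclosed : IsClosed (Z : Set U))
    (hZrange : Z ≤ LinearMap.range A)
    (hAZ : ∀ z ∈ Z, A (l z) = z)
    (Pperp : U → U)
    (hPperp : ∀ u, Pperp u ∈ Zᗮ ∧ u - Pperp u ∈ Zᗮᗮ)
    (u : U) (y : EuclideanSpace ℝ (Fin M)) :
    ‖A y - u‖
      ≤ sSup {r : ℝ | ∃ v : EuclideanSpace ℝ (Fin M), v ≠ 0 ∧ r = ‖A v‖ / ‖v‖}
          * ‖y - l u‖
        + (sSup {r : ℝ | ∃ v : U, v ≠ 0 ∧ r = ‖v - A (l v)‖ / ‖v‖}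
            + sSup {r : ℝ | ∃ w : U, w ∈ LinearMap.range A ∧ w ≠ 0
                ∧ r = ‖w - A (l w)‖ / ‖w‖})
          * ‖Pperp u‖ := by
  have hz : u - Pperp u ∈ Z := by
    have hz' := (hPperp u).2
    rwa [Z.orthogonal_orthogonal_eq_closure, hZclosed.submodule_topologicalClosure_eq] at hz'
  have error_bound := linear_pbdw_error_bound_general A.toContinuousLinearMap l (hAZ _ hz) u y
  rw [sub_sub_cancel, opNorm_eq_sSup_norm_div_norm, opNorm_eq_sSup_norm_div_norm] at error_bound
  refine error_bound.trans <| add_le_add le_rfl <|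
    mul_le_mul_of_nonneg_right (le_add_of_nonneg_right (Real.sSup_nonneg ?_)) (norm_nonneg _)
  rintro _ ⟨w, -, -, rfl⟩
  positivity
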